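/- arXiv:0908.3601 — 5 statements merged into one kernel-verified Lean document; each statement's English description precedes it below -/
import Mathlib

section
/- Let g : ℝ → ℝ and h : ℝ → ℝ be differentiable functions, and let u : ℝ × ℝ → ℝ be a differentiable function satisfying the implicit relation u(x,t) = h(x - t·g(u(x,t))) for all (x,t). If at a point (x,t) the nondegeneracy condition 1 + t·g'(u(x,t))·h'(x - t·g(u(x,t))) ≠ 0 holds, then u satisfies the homogeneous generalized inviscid Burgers' equation ∂u/∂t (x,t) + g(u(x,t))·∂u/∂x (x,t) = 0 at that point. -/
/-!
Let `D` be the derivative of `u` at `(x, t)` in the characteristic direction `(g (u (x, t)), 1)`;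
by linearity `D` is the left-hand side of Burgers' equation. Differentiating the implicit relation
in that direction, the two transport terms cancel and `D = h' * (-t * g' * D)` remains,
i.e. `(1 + t * g' * h') * D = 0`, so nondegeneracy forces `D = 0`.
-/

/-- If `u (x,t) = h (x - t * g (u (x,t)))` implicitly, then under the nondegeneracy
condition `u` solves the homogeneous generalized inviscid Burgers' equation
`u_t + g(u) * u_x = 0`. -/
theorem homogeneous_burgers_implicit_solution
    (g h : ℝ → ℝ) (hg : Differentiable ℝ g) (hh : Differentiable ℝ h)
    (u : ℝ × ℝ → ℝ) (hu : Differentiable ℝ u)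
    (himp : ∀ x t : ℝ, u (x, t) = h (x - t * g (u (x, t))))
    (x t : ℝ)
    (hnd : 1 + t * deriv g (u (x, t)) * deriv h (x - t * g (u (x, t))) ≠ 0) :
    fderiv ℝ u (x, t) (0, 1) + g (u (x, t)) * fderiv ℝ u (x, t) (1, 0) = 0 := by
  have hU := (hu (x, t)).hasFDerivAt
  have hG := (hg (u (x, t))).hasDerivAt.comp_hasFDerivAt (x, t) hU
  have hArg := (hasFDerivAt_fst (𝕜 := ℝ) (p := (x, t))).sub
    ((hasFDerivAt_snd (𝕜 := ℝ) (p := (x, t))).mul hG)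
  have hH := (hh (x - t * g (u (x, t)))).hasDerivAt.comp_hasFDerivAt (x, t) hArg
  have hEq := hU.unique
    (hH.congr_of_eventuallyEq (Filter.Eventually.of_forall fun p => himp p.1 p.2))
  have h1 := congrArg (fun L : ℝ × ℝ →L[ℝ] ℝ => L (1, 0)) hEq
  have h2 := congrArg (fun L : ℝ × ℝ →L[ℝ] ℝ => L (0, 1)) hEq
  simp at h1 h2
  apply (mul_eq_zero.mp _).resolve_left hnd
  linear_combination h2 + g (u (x, t)) * h1
end

section
/- Let a, b, c be real constants and let ε ∈ {1, -1}. Then the function u(x,t) = c - (1/2)·(a·t + ε·√(a²·t² + 4·a·x - 4·a·c·t + 4·b)) satisfies the inviscid Burgers' equation ∂u/∂t + u·∂u/∂x = 0 at every point (x,t) where a²·t² + 4·a·x - 4·a·c·t + 4·b > 0. -/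
/-!
Where the radicand is positive the square root is differentiable, so the chain rule gives both
partial derivatives of `u` explicitly. After clearing the square root from the denominator,
`u_t + u * u_x` is a multiple of `ε ^ 2 - 1`, which vanishes for `ε = 1` and `ε = -1`.
-/

/-- `u(x,t) = c - (1/2)*(a*t + ε*√(a²t² + 4ax - 4act + 4b))` solves the inviscid
Burgers' equation `u_t + u * u_x = 0` wherever the radicand is positive. -/
theorem burgers_sqrt_solution (a b c ε : ℝ) (hε : ε = 1 ∨ ε = -1) (x t : ℝ)
    (hpos : a ^ 2 * t ^ 2 + 4 * a * x - 4 * a * c * t + 4 * b > 0) :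
    fderiv ℝ (fun p : ℝ × ℝ =>
        c - (1 / 2) * (a * p.2 + ε * Real.sqrt (a ^ 2 * p.2 ^ 2 + 4 * a * p.1 - 4 * a * c * p.2 + 4 * b)))
      (x, t) (0, 1)
      + (c - (1 / 2) * (a * t + ε * Real.sqrt (a ^ 2 * t ^ 2 + 4 * a * x - 4 * a * c * t + 4 * b)))
        * fderiv ℝ (fun p : ℝ × ℝ =>
            c - (1 / 2) * (a * p.2 + ε * Real.sqrt (a ^ 2 * p.2 ^ 2 + 4 * a * p.1 - 4 * a * c * p.2 + 4 * b)))
          (x, t) (1, 0) = 0 := by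
  have hfst : HasFDerivAt (fun p : ℝ × ℝ => p.1) (ContinuousLinearMap.fst ℝ ℝ ℝ) (x, t) :=
    hasFDerivAt_fst
  have hsnd : HasFDerivAt (fun p : ℝ × ℝ => p.2) (ContinuousLinearMap.snd ℝ ℝ ℝ) (x, t) :=
    hasFDerivAt_snd
  have hrad := ((((hsnd.pow 2).const_mul (a ^ 2)).add (hfst.const_mul (4 * a))).sub
    (hsnd.const_mul (4 * a * c))).add_const (4 * b)
  have hu := (((hsnd.const_mul a).add
    ((hrad.sqrt hpos.ne').const_mul ε)).const_mul (1 / 2)).const_sub c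
  have hu' : HasFDerivAt (fun p : ℝ × ℝ =>
      c - (1 / 2) * (a * p.2 + ε * Real.sqrt
        (a ^ 2 * p.2 ^ 2 + 4 * a * p.1 - 4 * a * c * p.2 + 4 * b))) _ (x, t) := hu
  rw [hu'.fderiv]
  have hS := Real.sqrt_pos.mpr hpos
  have hε2 : ε ^ 2 = 1 := by rcases hε with h | h <;> simp [h]
  simp
  generalize Real.sqrt (a ^ 2 * t ^ 2 + 4 * a * x - 4 * a * c * t + 4 * b) = S at *
  -- With `S` the square root, `u_x = -ε a / S` and `u_t = -a/2 - ε (a² t - 2 a c) / (2 S)`;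
  -- the terms in `1 / S` cancel in `u_t + u u_x`, leaving `(ε² - 1) a / 2`.
  field_simp
  linear_combination (4 * a * S) * hε2
end

section
/- Let g : ℝ → ℝ, let G : ℝ → ℝ be differentiable with G'(y) = g(y) for all y, and let h : ℝ → ℝ be differentiable. Let u : ℝ × ℝ → ℝ be a differentiable function satisfying the implicit relation x = G(u(x,t)) + h(t - u(x,t)) for all (x,t). Then at every point (x,t) where g(u(x,t)) - h'(t - u(x,t)) ≠ 0, u satisfies ∂u/∂t (x,t) + g(u(x,t))·∂u/∂x (x,t) = 1. -/
/-!
Differentiating the identity `x = G (u (x, t)) + h (t - u (x, t))` at a point gives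
`dx = g(u) du + h'(t - u) (dt - du)`. Evaluated on the coordinate directions this reads
`(g - h') u_x = 1` and `(g - h') u_t = -h'`; adding `g` times the first to the second and
cancelling the nonzero factor `g - h'` yields the equation.
-/

/-- If `x = G (u (x,t)) + h (t - u (x,t))` implicitly with `G' = g`, then wherever
`g (u (x,t)) - h' (t - u (x,t)) ≠ 0`, `u` solves `u_t + g(u) * u_x = 1`. -/
theorem burgers_unit_source_implicit_solution
    (g G : ℝ → ℝ) (hG : Differentiable ℝ G) (hG' : ∀ y : ℝ, deriv G y = g y)
    (h : ℝ → ℝ) (hh : Differentiable ℝ h)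
    (u : ℝ × ℝ → ℝ) (hu : Differentiable ℝ u)
    (himp : ∀ x t : ℝ, x = G (u (x, t)) + h (t - u (x, t)))
    (x t : ℝ) (hnd : g (u (x, t)) - deriv h (t - u (x, t)) ≠ 0) :
    fderiv ℝ u (x, t) (0, 1) + g (u (x, t)) * fderiv ℝ u (x, t) (1, 0) = 1 := by
  have hGd : HasDerivAt G (g (u (x, t))) (u (x, t)) := hG' _ ▸ (hG _).hasDerivAt
  have hud : HasFDerivAt u (fderiv ℝ u (x, t)) (x, t) := (hu _).hasFDerivAt
  have hhd : HasDerivAt h (deriv h (t - u (x, t))) (t - u (x, t)) := (hh _).hasDerivAt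
  have htd : HasFDerivAt (fun p : ℝ × ℝ => p.2 - u p)
      (ContinuousLinearMap.snd ℝ ℝ ℝ - fderiv ℝ u (x, t)) (x, t) :=
    hasFDerivAt_snd.sub hud
  have hsum := (hGd.comp_hasFDerivAt (x, t) hud).add
    (HasDerivAt.comp_hasFDerivAt (x, t) (f := fun p : ℝ × ℝ => p.2 - u p) hhd htd)
  have hfst : HasFDerivAt (Prod.fst : ℝ × ℝ → ℝ) _ (x, t) :=
    hsum.congr_of_eventuallyEq (Filter.Eventually.of_forall fun p => himp p.1 p.2)
  have heq := hfst.unique hasFDerivAt_fst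
  -- The differentiated relation in the directions of `x` and of `t`.
  have hx := congrArg (fun L : ℝ × ℝ →L[ℝ] ℝ => L (1, 0)) heq
  have ht := congrArg (fun L : ℝ × ℝ →L[ℝ] ℝ => L (0, 1)) heq
  simp at hx ht
  apply mul_left_cancel₀ hnd
  linear_combination ht + g (u (x, t)) * hx
end

section
/- Let f, g : ℝ → ℝ with f nowhere zero. Let φ : ℝ → ℝ be differentiable with φ'(y) = 1/f(y) for all y, let ℓ : ℝ → ℝ be differentiable with ℓ'(φ(y)) = g(y) for all y (so that ℓ' = g ∘ φ⁻¹ on the range of φ), and let h : ℝ → ℝ be differentiable. Let u : ℝ × ℝ → ℝ be a differentiable function satisfying the implicit relation x = ℓ(φ(u(x,t))) + h(t - φ(u(x,t))) for all (x,t). Then at every point (x,t) where g(u(x,t)) - h'(t - φ(u(x,t))) ≠ 0, u satisfies the generalized nonhomogeneous inviscid Burgers' equation ∂u/∂t (x,t) + g(u(x,t))·∂u/∂x (x,t) = f(u(x,t)). -/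
/-! Write `G = g(u)`, `H = h'(t - φ(u))`, `F = f(u)` at the given point. Differentiating the
implicit relation along `(1, 0)` and `(0, 1)` gives `(G - H) u_x = F` and `(G - H) u_t = -H F`,
so `(G - H) (u_t + G u_x) = (G - H) F`, and `G - H ≠ 0` can be cancelled. -/

/-- Main theorem: if `x = ℓ (φ (u)) + h (t - φ (u))` implicitly, with `φ' = 1/f` and
`ℓ' ∘ φ = g`, then wherever `g (u) - h' (t - φ (u)) ≠ 0`, `u` solves the generalized
nonhomogeneous inviscid Burgers' equation `u_t + g(u) * u_x = f(u)`. -/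
theorem generalized_burgers_implicit_solution
    (f g : ℝ → ℝ) (hf : ∀ y : ℝ, f y ≠ 0)
    (φ : ℝ → ℝ) (hφ : Differentiable ℝ φ) (hφ' : ∀ y : ℝ, deriv φ y = 1 / f y)
    (ℓ : ℝ → ℝ) (hℓ : Differentiable ℝ ℓ) (hℓ' : ∀ y : ℝ, deriv ℓ (φ y) = g y)
    (h : ℝ → ℝ) (hh : Differentiable ℝ h)
    (u : ℝ × ℝ → ℝ) (hu : Differentiable ℝ u)
    (himp : ∀ x t : ℝ, x = ℓ (φ (u (x, t))) + h (t - φ (u (x, t))))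
    (x t : ℝ) (hnd : g (u (x, t)) - deriv h (t - φ (u (x, t))) ≠ 0) :
    fderiv ℝ u (x, t) (0, 1) + g (u (x, t)) * fderiv ℝ u (x, t) (1, 0) = f (u (x, t)) := by
  have hφd : HasDerivAt φ (1 / f (u (x, t))) (u (x, t)) := hφ' _ ▸ (hφ _).hasDerivAt
  have hℓd : HasDerivAt ℓ (g (u (x, t))) (φ (u (x, t))) := hℓ' _ ▸ (hℓ _).hasDerivAt
  have hhd := (hh (t - φ (u (x, t)))).hasDerivAt
  have hw := hφd.comp_hasFDerivAt (x, t) (hu (x, t)).hasFDerivAt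
  have hR := (hℓd.comp_hasFDerivAt (x, t) hw).add
    (hhd.comp_hasFDerivAt (x, t) ((hasFDerivAt_snd (𝕜 := ℝ) (p := (x, t))).sub hw))
  have hL := hasFDerivAt_fst (𝕜 := ℝ) (E := ℝ) (F := ℝ) (p := (x, t))
  have heq := hL.unique (hR.congr_of_eventuallyEq (.of_forall fun p => himp p.1 p.2))
  have hx := DFunLike.congr_fun heq (1, 0)
  have ht := DFunLike.congr_fun heq (0, 1)
  simp at hx ht
  have hF := hf (u (x, t))
  field_simp at hx ht
  apply mul_left_cancel₀ hnd
  linear_combination ht * (-1) - g (u (x, t)) * hx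
end

section
/- Let ε ∈ {1, -1}. Then the function u(x,t) = (1/6)·(x - 3·t + ε·√(x² + 9·t² - 6·x·t - 36)) satisfies the equation ∂u/∂t + 3·u²·∂u/∂x = u² (equivalently, u_t + (u³)_x = u²) at every point (x,t) where (x - 3·t)² > 36. -/
/-!
The function `u` depends on `(x, t)` only through `z = x - 3t`: it is `g(z)` with
`g(z) = (z + ε s) / 6` and `s = √(z² - 36)`. Hence `u_x = g'(z)`, `u_t = -3 g'(z)`, and the equation
reduces to `3 (u² - 1) g'(z) = u²`. Since `ε² = 1`, `g'(z) = ε u / s`, and `u` is a root of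
`3u² - z u + 3 = 0`, which gives `3 (u² - 1) = u (6u - z) = ε s u`.
-/

/-- `u(x,t) = (1/6)*(x - 3t + ε*√(x² + 9t² - 6xt - 36))` solves
`u_t + 3u² * u_x = u²` wherever `(x - 3t)² > 36`. -/
theorem burgers_cubic_flux_solution (ε : ℝ) (hε : ε = 1 ∨ ε = -1) (x t : ℝ)
    (hpos : (x - 3 * t) ^ 2 > 36) :
    fderiv ℝ (fun p : ℝ × ℝ =>
        (1 / 6) * (p.1 - 3 * p.2 + ε * Real.sqrt (p.1 ^ 2 + 9 * p.2 ^ 2 - 6 * p.1 * p.2 - 36)))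
      (x, t) (0, 1)
      + 3 * ((1 / 6) * (x - 3 * t + ε * Real.sqrt (x ^ 2 + 9 * t ^ 2 - 6 * x * t - 36))) ^ 2
        * fderiv ℝ (fun p : ℝ × ℝ =>
            (1 / 6) * (p.1 - 3 * p.2 + ε * Real.sqrt (p.1 ^ 2 + 9 * p.2 ^ 2 - 6 * p.1 * p.2 - 36)))
          (x, t) (1, 0)
      = ((1 / 6) * (x - 3 * t + ε * Real.sqrt (x ^ 2 + 9 * t ^ 2 - 6 * x * t - 36))) ^ 2 := by
  set z : ℝ := x - 3 * t with hz
  have hrad : x ^ 2 + 9 * t ^ 2 - 6 * x * t - 36 = z ^ 2 - 36 := by rw [hz]; ring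
  have hpos' : 0 < z ^ 2 - 36 := by linarith
  set s : ℝ := Real.sqrt (z ^ 2 - 36) with hs
  have hs0 : s ≠ 0 := (Real.sqrt_pos.mpr hpos').ne'
  have hs2 : s ^ 2 = z ^ 2 - 36 := Real.sq_sqrt hpos'.le
  have hε2 : ε ^ 2 = 1 := by rcases hε with h | h <;> rw [h] <;> norm_num
  have hg : HasDerivAt (fun w : ℝ => (1 / 6) * (w + ε * Real.sqrt (w ^ 2 - 36)))
      ((1 / 6) * (1 + ε * (2 * z / (2 * s)))) z := by
    have h1 : HasDerivAt (fun w : ℝ => w ^ 2 - 36) (2 * z) z := by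
      simpa using (hasDerivAt_pow 2 z).sub_const 36
    exact ((hasDerivAt_id z).add ((h1.sqrt hpos'.ne').const_mul ε)).const_mul (1 / 6)
  have hL : HasFDerivAt (fun p : ℝ × ℝ => p.1 - 3 * p.2)
      (ContinuousLinearMap.fst ℝ ℝ ℝ - (3 : ℝ) • ContinuousLinearMap.snd ℝ ℝ ℝ) (x, t) :=
    hasFDerivAt_fst.sub (hasFDerivAt_snd.const_mul 3)
  have hfun : (fun p : ℝ × ℝ =>
        (1 / 6) * (p.1 - 3 * p.2 + ε * Real.sqrt (p.1 ^ 2 + 9 * p.2 ^ 2 - 6 * p.1 * p.2 - 36)))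
      = (fun w : ℝ => (1 / 6) * (w + ε * Real.sqrt (w ^ 2 - 36))) ∘
        (fun p : ℝ × ℝ => p.1 - 3 * p.2) := by
    funext p
    have : p.1 ^ 2 + 9 * p.2 ^ 2 - 6 * p.1 * p.2 - 36 = (p.1 - 3 * p.2) ^ 2 - 36 := by ring
    simp only [Function.comp_apply, this]
  have hu := (HasDerivAt.comp_hasFDerivAt (x, t) hg hL).fderiv
  rw [hfun, hu, hrad, ← hs]
  set u : ℝ := (1 / 6) * (z + ε * s) with hudef
  have hderiv : (1 / 6) * (1 + ε * (2 * z / (2 * s))) = ε * u / s := by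
    rw [hudef]
    field_simp
    linear_combination (-s) * hε2
  have hquad : 3 * (u ^ 2 - 1) = ε * s * u := by
    rw [hudef]
    linear_combination (-(1 / 12) * s ^ 2) * hε2 - (1 / 12) * hs2
  rw [hderiv]
  simp only [smul_apply, sub_apply, ContinuousLinearMap.coe_fst', ContinuousLinearMap.coe_snd',
    smul_eq_mul]
  field_simp
  linear_combination (ε * u) * hquad + (s * u ^ 2) * hε2
end
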